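/- Let G be a finite non-cyclic subgroup of N such that π(G) is cyclic of order 4 and the order of G ∩ T lies in {1,2,3,5}. Then G is conjugate by an element of N either to the subgroup ⟨τ_{ζ₅,ζ₅²}, ι₁·s⟩ generated by (x,y) ↦ (ζ₅x, ζ₅²y) and (x,y) ↦ (y⁻¹, x), which is isomorphic to 𝔉₅ = C₅⋊C₄ of order 20, or to the subgroup ⟨τ_{−1,−1}, ι₁·s⟩ generated by (x,y) ↦ (−x,−y) and (x,y) ↦ (y⁻¹, x), which is isomorphic to C₂ × C₄. -/

import Mathlib

noncomputable section

/-- The torus ℂˣ × ℂˣ on which the group N acts. -/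
abbrev TT : Type := ℂˣ × ℂˣ

/-- The inversion ι₁ : (x,y) ↦ (x⁻¹, y), as a group automorphism of the torus. -/
def j1 : MulAut TT := MulEquiv.prodCongr (MulEquiv.inv ℂˣ) (MulEquiv.refl ℂˣ)

/-- The inversion ι₂ : (x,y) ↦ (x, y⁻¹), as a group automorphism of the torus. -/
def j2 : MulAut TT := MulEquiv.prodCongr (MulEquiv.refl ℂˣ) (MulEquiv.inv ℂˣ)

/-- The swap s : (x,y) ↦ (y,x), as a group automorphism of the torus. -/
def sA : MulAut TT := MulEquiv.prodComm

/-- D = ⟨ι₁, ι₂, s⟩ ≅ C₂≀C₂ ≅ D₄, the group of automorphisms of the torus permuting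
the four boundary lines of ℙ¹×ℙ¹. -/
def DD : Subgroup (MulAut TT) := Subgroup.closure {j1, j2, sA}

/-- N = T ⋊ D, the normalizer of the maximal torus in Aut(ℙ¹×ℙ¹): the group of
bijections of ℂˣ × ℂˣ generated by the scalings τ_{a,b} : (x,y) ↦ (ax,by),
the inversions ι₁, ι₂, and the swap s.  The element ⟨(a,b), d⟩ acts on p ∈ ℂˣ × ℂˣ
by p ↦ (a,b) * d(p). -/
abbrev NQ : Type := SemidirectProduct TT DD DD.subtype

/-- ι₁ as an element of D. -/
def dj1 : DD := ⟨j1, Subgroup.subset_closure (by simp)⟩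

/-- ι₂ as an element of D. -/
def dj2 : DD := ⟨j2, Subgroup.subset_closure (by simp)⟩

/-- s as an element of D. -/
def dsA : DD := ⟨sA, Subgroup.subset_closure (by simp)⟩

/-- ι₁ι₂ as an element of D. -/
def d12 : DD := dj1 * dj2

/-- ι₁·s (i.e. (x,y) ↦ (y⁻¹, x)) as an element of D. -/
def d1s : DD := dj1 * dsA

/-- The scaling τ_{a,b} : (x,y) ↦ (ax, by), as an element of N. -/
def tl (a b : ℂˣ) : NQ := SemidirectProduct.inl ((a, b) : TT)

/-- The element of N given by an element of D. -/
def rr (d : DD) : NQ := SemidirectProduct.inr d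

/-- The scaling subgroup T ≤ N. -/
def Tsub : Subgroup NQ := (SemidirectProduct.inl : TT →* NQ).range

/-- The projection π : N → N/T ≅ D. -/
def πN : NQ →* DD := SemidirectProduct.rightHom

/-- ζ_m = exp(2πi/m), a fixed primitive m-th root of unity in ℂ (as a unit). -/
def ζu (m : ℕ) : ℂˣ :=
  Units.mk0 (Complex.exp (2 * Real.pi * Complex.I / m)) (Complex.exp_ne_zero _)

/-- The point of ℂˣ × ℂˣ is fixed by the element g of N. -/
def fixes (g : NQ) (p : TT) : Prop := g.left * (g.right : MulAut TT) p = p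

/-!
Up to inversion, `ρ = ι₁s : (x, y) ↦ (y⁻¹, x)` is the only element of order 4 of `D`, so
`π(G) = ⟨ρ⟩`. The map `t ↦ ρ(t) / t` of the torus is surjective because one can take square roots
in `ℂˣ`; hence a lift of `ρ` to `G` has a fixed point on the torus, and after conjugating by a
scaling we may assume `ρ ∈ G`. Then `G` is generated by `A = G ∩ T` and `ρ`, and `A` is `ρ`-stable.
If `A` has prime order `p`, then `ρ` acts on `A` as `t ↦ tᵏ`, and as `ρ²` is the inversion of the
torus, `k² ≡ -1 mod p`. This determines `A` for `p = 2`, excludes `p = 3`, and leaves two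
possibilities for `p = 5`, exchanged by the swap.
-/

section Group

variable {G : Type*} [Group G]

lemma eq_zpowers_of_prime_card {A : Subgroup G} {p : ℕ} [Fact p.Prime] (hA : Nat.card A = p)
    {t : G} (ht : t ∈ A) (ht_ne : t ≠ 1) : A = Subgroup.zpowers t := by
  refine le_antisymm (fun a ha => ?_) (Subgroup.zpowers_le.2 ht)
  obtain ⟨k, hk⟩ := Subgroup.mem_zpowers_iff.1 <|
    mem_zpowers_of_prime_card (g := ⟨t, ht⟩) (g' := (⟨a, ha⟩ : A)) hA (by simpa using ht_ne)
  exact ⟨k, congrArg Subtype.val hk⟩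

lemma closure_pair_eq_zpowers_sup (a b : G) :
    Subgroup.closure {a, b} = Subgroup.zpowers a ⊔ Subgroup.zpowers b := by
  rw [Subgroup.zpowers_eq_closure, Subgroup.zpowers_eq_closure, ← Subgroup.closure_union,
    Set.singleton_union]

lemma map_conj_map_conj (g h : G) (K : Subgroup G) :
    (K.map (MulAut.conj h).toMonoidHom).map (MulAut.conj g).toMonoidHom =
      K.map (MulAut.conj (g * h)).toMonoidHom := by
  rw [Subgroup.map_map, map_mul]
  rfl

lemma card_inf_ker_mul_card_map {H : Type*} [Group H] (f : G →* H) (K : Subgroup G) :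
    Nat.card (K ⊓ f.ker : Subgroup G) * Nat.card (K.map f) = Nat.card K := by
  rw [← Subgroup.relIndex_ker, ← Subgroup.inf_relIndex_left, ← Subgroup.relIndex_bot_left,
    ← Subgroup.relIndex_bot_left, Subgroup.relIndex_mul_relIndex _ _ _ bot_le inf_le_left]

lemma mem_zpowers_or_sq_eq_one_of_mem_closure_pair {r s : G} (hs : s ^ 2 = 1)
    (hsr : SemiconjBy s r r⁻¹) {d : G} (hd : d ∈ Subgroup.closure {r, s}) :
    d ∈ Subgroup.zpowers r ∨ d ^ 2 = 1 := by
  have s_inv : s⁻¹ = s := inv_eq_of_mul_eq_one_left (by rw [← pow_two, hs])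
  have s_mul_zpow (k : ℤ) : s * r ^ k = r ^ (-k) * s := by
    simpa using (hsr.zpow_right k).eq
  suffices d ∈ Subgroup.zpowers r ∨ ∃ k : ℤ, d = r ^ k * s by
    refine this.imp_right ?_
    rintro ⟨k, rfl⟩
    rw [pow_two, mul_assoc, ← mul_assoc s, s_mul_zpow, mul_assoc, ← pow_two, hs, mul_one,
      zpow_neg, mul_inv_cancel]
  have step_r (e : ℤ) {y : G} (hy : y ∈ Subgroup.zpowers r ∨ ∃ k : ℤ, y = r ^ k * s) :
      r ^ e * y ∈ Subgroup.zpowers r ∨ ∃ k : ℤ, r ^ e * y = r ^ k * s := by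
    rcases hy with hy | ⟨k, rfl⟩
    · exact .inl (mul_mem (Subgroup.zpow_mem_zpowers r e) hy)
    · exact .inr ⟨e + k, by rw [zpow_add, mul_assoc]⟩
  have step_s {y : G} (hy : y ∈ Subgroup.zpowers r ∨ ∃ k : ℤ, y = r ^ k * s) :
      s * y ∈ Subgroup.zpowers r ∨ ∃ k : ℤ, s * y = r ^ k * s := by
    rcases hy with ⟨k, rfl⟩ | ⟨k, rfl⟩
    · exact .inr ⟨-k, s_mul_zpow k⟩
    · refine .inl ⟨-k, ?_⟩
      simp only [← mul_assoc, s_mul_zpow]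
      rw [mul_assoc, ← pow_two, hs, mul_one]
  induction hd using Subgroup.closure_induction_left with
  | one => exact .inl (one_mem _)
  | mul_left x hx y _ hy =>
    rcases hx with rfl | rfl
    · simpa using step_r 1 hy
    · exact step_s hy
  | inv_mul_cancel x hx y _ hy =>
    rcases hx with rfl | rfl
    · simpa using step_r (-1) hy
    · simpa [s_inv] using step_s hy

lemma nonempty_closure_pair_mulEquiv {a b : G} {m n : ℕ} (hab : Commute a b)
    (ha : orderOf a = m) (hb : orderOf b = n)
    (hdisj : Disjoint (Subgroup.zpowers a) (Subgroup.zpowers b)) :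
    Nonempty (Subgroup.closure {a, b} ≃* Multiplicative (ZMod m × ZMod n)) := by
  subst ha hb
  have zpowers_equiv (g : G) :
      Nonempty (Subgroup.zpowers g ≃* Multiplicative (ZMod (orderOf g))) := by
    rw [← Nat.card_zpowers]
    exact ⟨(zmodCyclicMulEquiv inferInstance).symm⟩
  obtain ⟨ea⟩ := zpowers_equiv a
  obtain ⟨eb⟩ := zpowers_equiv b
  let F := MonoidHom.noncommCoprod (Subgroup.zpowers a).subtype (Subgroup.zpowers b).subtype <| by
    rintro ⟨_, i, rfl⟩ ⟨_, j, rfl⟩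
    exact hab.zpow_zpow i j
  have F_injective : Function.Injective F := by
    rw [MonoidHom.noncommCoprod_injective, Subgroup.range_subtype, Subgroup.range_subtype]
    exact ⟨Subtype.coe_injective, Subtype.coe_injective, hdisj⟩
  have F_range : F.range = Subgroup.closure {a, b} := by
    rw [MonoidHom.noncommCoprod_range, Subgroup.range_subtype, Subgroup.range_subtype,
      closure_pair_eq_zpowers_sup]
  rw [← F_range]
  exact ⟨(MonoidHom.ofInjective F_injective).symm.trans
    ((MulEquiv.prodCongr ea eb).trans (MulEquiv.prodMultiplicative _ _).symm)⟩

end Group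

section Semidirect

open SemidirectProduct

variable {N H : Type*} [Group H]

section NormalFactor

variable [Group N] {φ : H →* MulAut N} {G : Subgroup (N ⋊[φ] H)}

lemma conj_inl_mk (t n : N) (h : H) :
    MulAut.conj (inl t) (⟨n, h⟩ : N ⋊[φ] H) = ⟨t * n * (φ h t)⁻¹, h⟩ := by
  ext <;> simp [MulAut.conj_apply]

lemma map_rightHom_map_conj_inl (t : N) (G : Subgroup (N ⋊[φ] H)) :
    (G.map (MulAut.conj (inl t)).toMonoidHom).map rightHom = G.map rightHom := by
  rw [Subgroup.map_map]
  congr 1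
  ext g
  simp [MulAut.conj_apply]

lemma apply_mem_comap_inl {h : H} (hh : inr h ∈ G) {n : N} (hn : n ∈ G.comap inl) :
    φ h n ∈ G.comap inl := by
  rw [Subgroup.mem_comap, inl_aut, map_inv]
  exact mul_mem (mul_mem hh hn) (inv_mem hh)

lemma eq_map_inl_sup_map_inr {K : Subgroup H} (hK : K.map inr ≤ G) (hG : G.map rightHom ≤ K) :
    G = (G.comap inl).map inl ⊔ K.map inr := by
  refine le_antisymm (fun g hg => ?_) (sup_le (Subgroup.map_comap_le _ _) hK)
  have right_mem : inr g.right ∈ K.map (inr : H →* N ⋊[φ] H) :=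
    Subgroup.mem_map_of_mem _ (hG (Subgroup.mem_map_of_mem rightHom hg))
  have left_mem : g.left ∈ G.comap (inl : N →* N ⋊[φ] H) := by
    rw [Subgroup.mem_comap, eq_mul_inv_of_mul_eq (inl_left_mul_inr_right g)]
    exact mul_mem hg (inv_mem (hK right_mem))
  rw [← inl_left_mul_inr_right g]
  exact Subgroup.mul_mem_sup (Subgroup.mem_map_of_mem _ left_mem) right_mem

lemma eq_closure_inl_inr {h : H} (hh : inr h ∈ G) (hG : G.map rightHom ≤ Subgroup.zpowers h)
    {n : N} (hn : G.comap inl = Subgroup.zpowers n) :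
    G = Subgroup.closure {inl n, inr h} := by
  have zpowers_map_le : (Subgroup.zpowers h).map inr ≤ G := by
    rwa [MonoidHom.map_zpowers, Subgroup.zpowers_le]
  rw [eq_map_inl_sup_map_inr zpowers_map_le hG, hn, MonoidHom.map_zpowers, MonoidHom.map_zpowers,
    closure_pair_eq_zpowers_sup]

lemma card_comap_inl (G : Subgroup (N ⋊[φ] H)) :
    Nat.card (G.comap (inl : N →* N ⋊[φ] H)) =
      Nat.card (G ⊓ (inl : N →* N ⋊[φ] H).range : Subgroup (N ⋊[φ] H)) := by
  rw [inf_comm, ← Subgroup.map_comap_eq, Subgroup.card_map_of_injective inl_injective]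

lemma disjoint_zpowers_inl_inr (n : N) (h : H) :
    Disjoint (Subgroup.zpowers (inl n : N ⋊[φ] H)) (Subgroup.zpowers (inr h)) := by
  rw [Subgroup.disjoint_def, ← MonoidHom.map_zpowers, ← MonoidHom.map_zpowers]
  rintro _ ⟨m, -, rfl⟩ ⟨k, -, hk⟩
  have : (1 : N) = m := congrArg left hk
  rw [← this, map_one]

end NormalFactor

lemma comap_inl_map_conj_inl [CommGroup N] {φ : H →* MulAut N} (t : N)
    (G : Subgroup (N ⋊[φ] H)) :
    (G.map (MulAut.conj (inl t)).toMonoidHom).comap inl = G.comap inl := by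
  have conj_symm_comp_inl : (MulAut.conj (inl t : N ⋊[φ] H)).symm.toMonoidHom.comp inl = inl := by
    ext n : 1
    simp [← map_inv, ← map_mul, mul_comm t⁻¹]
  rw [Subgroup.map_equiv_eq_comap_symm', Subgroup.comap_comap, conj_symm_comp_inl]

end Semidirect

section QuarterTurn

/-- The automorphism `(x, y) ↦ (y⁻¹, x)` of `A × A`, whose square is the inversion.
For `A = ℂˣ` it is the underlying automorphism of `d1s`. -/
def quarterTurn (A : Type*) [CommGroup A] : MulAut (A × A) :=
  MulEquiv.prodComm.trans (MulEquiv.prodCongr (MulEquiv.inv A) (MulEquiv.refl A))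

variable {A : Type*} [CommGroup A]

@[simp]
lemma quarterTurn_apply (t : A × A) : quarterTurn A t = (t.2⁻¹, t.1) := rfl

lemma quarterTurn_sq_apply (t : A × A) : (quarterTurn A ^ 2) t = t⁻¹ := rfl

lemma orderOf_quarterTurn {a : A} (ha : a⁻¹ ≠ a) : orderOf (quarterTurn A) = 4 := by
  refine orderOf_eq_prime_pow (p := 2) (n := 1) (fun h => ha ?_) ?_
  · exact congrArg Prod.fst (DFunLike.congr_fun h (a, a))
  · ext t : 1
    change (quarterTurn A ^ (2 * 2)) t = t
    rw [pow_mul, pow_two, MulAut.mul_apply, quarterTurn_sq_apply, quarterTurn_sq_apply, inv_inv]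

lemma exists_quarterTurn_eq_mul (hA : ∀ a : A, IsSquare a) (n : A × A) :
    ∃ t : A × A, quarterTurn A t = t * n := by
  obtain ⟨v, hv⟩ := hA (n.1 * n.2)⁻¹
  refine ⟨(v * n.2, v), Prod.ext ?_ rfl⟩
  have v_inv : v⁻¹ = v * (n.1 * n.2) := by
    rw [inv_eq_iff_mul_eq_one, ← mul_assoc, ← hv, inv_mul_cancel]
  simp [v_inv, mul_assoc, mul_comm n.1]

section PrimeOrder

variable {p : ℕ} [hp : Fact p.Prime] {S : Subgroup (A × A)}

lemma exists_eq_zpowers_of_quarterTurn_stable (hS : Nat.card S = p)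
    (hstable : ∀ t ∈ S, quarterTurn A t ∈ S) :
    ∃ (k : ℤ) (y : A), orderOf y = p ∧ (p : ℤ) ∣ k ^ 2 + 1 ∧ S = Subgroup.zpowers (y ^ k, y) := by
  obtain ⟨⟨x, y⟩, ht, ht_ne⟩ := S.bot_or_exists_ne_one.resolve_left <| by
    rintro rfl
    exact hp.out.ne_one (hS.symm.trans Subgroup.card_bot)
  have S_eq := eq_zpowers_of_prime_card hS ht ht_ne
  obtain ⟨k, hk⟩ := Subgroup.mem_zpowers_iff.1 (S_eq ▸ hstable _ ht)
  obtain ⟨x_zpow, rfl⟩ : x ^ k = y⁻¹ ∧ y ^ k = x := Prod.ext_iff.1 hk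
  have y_pow : y ^ p = 1 := by
    have : ((y ^ k, y) : A × A) ^ p = 1 := by
      rw [← hS, S_eq, Nat.card_zpowers, pow_orderOf_eq_one]
    exact congrArg Prod.snd this
  have y_ne : y ≠ 1 := by
    rintro rfl
    simp at ht_ne
  have orderOf_y : orderOf y = p := orderOf_eq_prime y_pow y_ne
  refine ⟨k, y, orderOf_y, ?_, S_eq⟩
  rw [← orderOf_y, orderOf_dvd_iff_zpow_eq_one, zpow_add_one, pow_two, zpow_mul, x_zpow,
    inv_mul_cancel]

lemma card_mod_four_ne_three_of_quarterTurn_stable (hS : Nat.card S = p)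
    (hstable : ∀ t ∈ S, quarterTurn A t ∈ S) : p % 4 ≠ 3 := by
  obtain ⟨k, -, -, hk, -⟩ := exists_eq_zpowers_of_quarterTurn_stable hS hstable
  refine ZMod.exists_sq_eq_neg_one_iff.1 ⟨k, ?_⟩
  have k_sq : (k : ZMod p) ^ 2 + 1 = 0 := by
    exact_mod_cast (ZMod.intCast_zmod_eq_zero_iff_dvd _ _).2 hk
  rw [← pow_two, eq_comm, eq_neg_iff_add_eq_zero, k_sq]

end PrimeOrder

section RootsOfUnity

lemma isPrimitiveRoot_units_neg_one {R : Type*} [CommRing R] [Nontrivial R]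
    (hR : ringChar R ≠ 2) : IsPrimitiveRoot (-1 : Rˣ) 2 :=
  IsPrimitiveRoot.coe_units_iff.1 (IsPrimitiveRoot.neg_one (ringChar R) hR)

variable {R : Type*} [CommRing R] [IsDomain R] {S : Subgroup (Rˣ × Rˣ)} {ζ : Rˣ}

lemma exists_eq_zpowers_of_quarterTurn_stable_of_isPrimitiveRoot {p : ℕ} [Fact p.Prime]
    (hS : Nat.card S = p) (hstable : ∀ t ∈ S, quarterTurn Rˣ t ∈ S) (hζ : IsPrimitiveRoot ζ p) :
    ∃ k : ℤ, (p : ℤ) ∣ k ^ 2 + 1 ∧ S = Subgroup.zpowers (ζ ^ k, ζ) := by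
  obtain ⟨k, y, orderOf_y, hk, rfl⟩ := exists_eq_zpowers_of_quarterTurn_stable hS hstable
  have hy : IsPrimitiveRoot y p := IsPrimitiveRoot.iff_orderOf.2 orderOf_y
  have ζ_mem : ζ ∈ Subgroup.zpowers y := by
    rw [hy.zpowers_eq, ← hζ.zpowers_eq]
    exact Subgroup.mem_zpowers ζ
  obtain ⟨j, rfl⟩ := Subgroup.mem_zpowers_iff.1 ζ_mem
  refine ⟨k, hk, eq_zpowers_of_prime_card hS ⟨j, ?_⟩ fun h => ?_⟩
  · exact Prod.ext (zpow_comm y k j) rfl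
  · exact hζ.ne_one (Fact.out : p.Prime).one_lt (congrArg Prod.snd h)

lemma eq_zpowers_neg_one_of_quarterTurn_stable (hS : Nat.card S = 2)
    (hstable : ∀ t ∈ S, quarterTurn Rˣ t ∈ S) (hR : ringChar R ≠ 2) :
    S = Subgroup.zpowers (-1, -1) := by
  obtain ⟨k, hk, rfl⟩ :=
    exists_eq_zpowers_of_quarterTurn_stable_of_isPrimitiveRoot hS hstable
      (isPrimitiveRoot_units_neg_one hR)
  have k_odd : Odd k := by
    have : Odd (k ^ 2) := by simpa using (even_iff_two_dvd.2 hk).sub_odd odd_one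
    exact Int.Odd.of_mul_left (by rwa [pow_two] at this)
  rw [k_odd.neg_one_zpow]

lemma eq_zpowers_of_quarterTurn_stable_of_card_eq_five (hS : Nat.card S = 5)
    (hstable : ∀ t ∈ S, quarterTurn Rˣ t ∈ S) (hζ : IsPrimitiveRoot ζ 5) :
    S = Subgroup.zpowers (ζ, ζ ^ 2) ∨ S = Subgroup.zpowers (ζ ^ 2, ζ) := by
  have roots : ∀ x : ZMod 5, x ^ 2 + 1 = 0 → x = 2 ∨ x = 3 := by decide
  have : Fact (Nat.Prime 5) := ⟨Nat.prime_five⟩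
  obtain ⟨k, hk, S_eq⟩ := exists_eq_zpowers_of_quarterTurn_stable_of_isPrimitiveRoot hS hstable hζ
  have zpow_congr {m n : ℤ} (h : m ≡ n [ZMOD 5]) : ζ ^ m = ζ ^ n :=
    zpow_eq_zpow_iff_modEq.2 (hζ.eq_orderOf ▸ h)
  have k_mod : k ≡ 2 [ZMOD 5] ∨ k ≡ 3 [ZMOD 5] := by
    have k_sq : (k : ZMod 5) ^ 2 + 1 = 0 := by
      exact_mod_cast (ZMod.intCast_zmod_eq_zero_iff_dvd _ 5).2 hk
    exact (roots k k_sq).imp (ZMod.intCast_eq_intCast_iff _ 2 5).1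
      (ZMod.intCast_eq_intCast_iff _ 3 5).1
  rcases k_mod with h | h
  · right
    rw [S_eq, zpow_congr h, zpow_ofNat]
  · left
    refine eq_zpowers_of_prime_card hS ?_ fun h => hζ.ne_one (by norm_num) (congrArg Prod.fst h)
    have sq_eq : ((ζ ^ k, ζ) : Rˣ × Rˣ) ^ 2 = (ζ, ζ ^ 2) := by
      have : ζ ^ (k * 2) = ζ := by
        simpa using zpow_congr (n := 1) (h.mul_right 2)
      rw [Prod.pow_mk, ← zpow_natCast, ← zpow_mul, Nat.cast_ofNat, this]
    rw [S_eq, ← sq_eq]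
    exact Subgroup.npow_mem_zpowers _ 2

end RootsOfUnity

end QuarterTurn

section Normalizer

lemma isSquare_units_of_isAlgClosed {K : Type*} [Field K] [IsAlgClosed K] (u : Kˣ) :
    IsSquare u := by
  obtain ⟨z, hz⟩ := IsAlgClosed.exists_eq_mul_self (u : K)
  have z_ne : z ≠ 0 := left_ne_zero_of_mul (hz ▸ u.ne_zero)
  exact ⟨Units.mk0 z z_ne, Units.ext hz⟩

lemma isPrimitiveRoot_ζu {m : ℕ} (hm : m ≠ 0) : IsPrimitiveRoot (ζu m) m :=
  IsPrimitiveRoot.coe_units_iff.1 (Complex.isPrimitiveRoot_exp m hm)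

lemma coe_d1s : (d1s : MulAut TT) = quarterTurn ℂˣ := rfl

lemma orderOf_d1s : orderOf d1s = 4 := by
  rw [← Subgroup.orderOf_coe, coe_d1s]
  refine orderOf_quarterTurn (a := Units.mk0 (2 : ℂ) two_ne_zero) fun h => ?_
  have := congrArg Units.val h
  norm_num at this

lemma DD_le_closure_quarterTurn_sA : DD ≤ Subgroup.closure {quarterTurn ℂˣ, sA} := by
  have turn_mem : quarterTurn ℂˣ ∈ Subgroup.closure {quarterTurn ℂˣ, sA} :=
    Subgroup.subset_closure (by simp)
  have sA_mem : sA ∈ Subgroup.closure {quarterTurn ℂˣ, sA} := Subgroup.subset_closure (by simp)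
  rw [DD, Subgroup.closure_le]
  rintro _ (rfl | rfl | rfl)
  · exact mul_mem turn_mem sA_mem
  · exact mul_mem sA_mem turn_mem
  · exact sA_mem

lemma mem_zpowers_d1s_or_sq_eq_one (d : DD) : d ∈ Subgroup.zpowers d1s ∨ d ^ 2 = 1 := by
  have sA_sq : sA ^ 2 = 1 := rfl
  have sA_semiconj : SemiconjBy sA (quarterTurn ℂˣ) (quarterTurn ℂˣ)⁻¹ := by
    ext t <;> rfl
  rcases mem_zpowers_or_sq_eq_one_of_mem_closure_pair sA_sq sA_semiconj
    (DD_le_closure_quarterTurn_sA d.2) with ⟨k, hk⟩ | hd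
  · exact .inl ⟨k, Subtype.ext hk⟩
  · exact .inr (Subtype.ext hd)

lemma eq_zpowers_d1s_of_isCyclic {K : Subgroup DD} (hK : IsCyclic K) (hcard : Nat.card K = 4) :
    K = Subgroup.zpowers d1s := by
  obtain ⟨d, rfl⟩ := (K.isCyclic_iff_exists_zpowers_eq_top).1 hK
  rw [Nat.card_zpowers] at hcard
  have sq_ne_one : d ^ 2 ≠ 1 := pow_ne_one_of_lt_orderOf two_ne_zero (by lia)
  have d_mem := (mem_zpowers_d1s_or_sq_eq_one d).resolve_right sq_ne_one
  have : Finite (Subgroup.zpowers d1s) :=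
    Nat.finite_of_card_ne_zero (by rw [Nat.card_zpowers, orderOf_d1s]; decide)
  refine Subgroup.eq_of_le_of_card_ge (Subgroup.zpowers_le.2 d_mem) ?_
  rw [Nat.card_zpowers, Nat.card_zpowers, orderOf_d1s, hcard]

lemma exists_rr_d1s_mem_map_conj_inl {G : Subgroup NQ} (hG : d1s ∈ G.map πN) :
    ∃ t : TT, rr d1s ∈ G.map (MulAut.conj (SemidirectProduct.inl t)).toMonoidHom := by
  obtain ⟨⟨n, d⟩, hg, hd : d = d1s⟩ := hG
  obtain ⟨t, ht⟩ := exists_quarterTurn_eq_mul isSquare_units_of_isAlgClosed n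
  refine ⟨t, ⟨n, d⟩, hg, ?_⟩
  rw [MulEquiv.coe_toMonoidHom, conj_inl_mk, hd, Subgroup.subtype_apply, coe_d1s, ht,
    mul_inv_cancel]
  rfl

lemma map_conj_rr_dsA_closure (a b : ℂˣ) :
    (Subgroup.closure {tl a b, rr d1s}).map (MulAut.conj (rr dsA)).toMonoidHom =
      Subgroup.closure {tl b a, rr d1s} := by
  have conj_tl : MulAut.conj (rr dsA) (tl a b) = tl b a := by
    rw [MulAut.conj_apply, rr, ← map_inv]
    exact (SemidirectProduct.inl_aut dsA (a, b)).symm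
  have conj_rr : MulAut.conj (rr dsA) (rr d1s) = (rr d1s)⁻¹ := by
    have conj_d1s : dsA * d1s * dsA⁻¹ = d1s⁻¹ := Subtype.ext (MulEquiv.ext fun _ => rfl)
    simp only [MulAut.conj_apply, rr, ← map_inv, ← map_mul, conj_d1s]
  rw [closure_pair_eq_zpowers_sup, Subgroup.map_sup, MonoidHom.map_zpowers, MonoidHom.map_zpowers,
    MulEquiv.coe_toMonoidHom, conj_tl, conj_rr, Subgroup.zpowers_inv, closure_pair_eq_zpowers_sup]

section RotationMem

variable {G : Subgroup NQ}

lemma quarterTurn_mem_comap_inl (hr : rr d1s ∈ G) (t : TT)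
    (ht : t ∈ G.comap SemidirectProduct.inl) :
    quarterTurn ℂˣ t ∈ G.comap SemidirectProduct.inl :=
  apply_mem_comap_inl hr ht

lemma card_comap_inl_ne_three (hr : rr d1s ∈ G) :
    Nat.card (G.comap (SemidirectProduct.inl : TT →* NQ)) ≠ 3 := fun h =>
  have : Fact (Nat.Prime 3) := ⟨Nat.prime_three⟩
  card_mod_four_ne_three_of_quarterTurn_stable h (quarterTurn_mem_comap_inl hr) rfl

lemma isCyclic_of_card_comap_inl_eq_one (hr : rr d1s ∈ G)
    (hG : G.map πN ≤ Subgroup.zpowers d1s)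
    (hA : Nat.card (G.comap (SemidirectProduct.inl : TT →* NQ)) = 1) : IsCyclic G := by
  have comap_eq : G.comap SemidirectProduct.inl = Subgroup.zpowers (1 : TT) := by
    rw [Subgroup.zpowers_one_eq_bot, Subgroup.eq_bot_of_card_eq _ hA]
  rw [eq_closure_inl_inr hr hG comap_eq, map_one, Subgroup.closure_insert_one,
    ← Subgroup.zpowers_eq_closure]
  infer_instance

lemma eq_closure_of_card_comap_inl_eq_two (hr : rr d1s ∈ G)
    (hG : G.map πN ≤ Subgroup.zpowers d1s)
    (hA : Nat.card (G.comap (SemidirectProduct.inl : TT →* NQ)) = 2) :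
    G = Subgroup.closure {tl (-1) (-1), rr d1s} :=
  eq_closure_inl_inr hr hG <| eq_zpowers_neg_one_of_quarterTurn_stable hA
    (quarterTurn_mem_comap_inl hr) (by simp)

lemma exists_conj_eq_closure_of_card_comap_inl_eq_five (hr : rr d1s ∈ G)
    (hG : G.map πN ≤ Subgroup.zpowers d1s)
    (hA : Nat.card (G.comap (SemidirectProduct.inl : TT →* NQ)) = 5) :
    ∃ h : NQ, G.map (MulAut.conj h).toMonoidHom =
      Subgroup.closure {tl (ζu 5) (ζu 5 ^ 2), rr d1s} := by
  rcases eq_zpowers_of_quarterTurn_stable_of_card_eq_five hA (quarterTurn_mem_comap_inl hr)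
    (isPrimitiveRoot_ζu (by norm_num)) with comap_eq | comap_eq
  · refine ⟨1, ?_⟩
    rw [eq_closure_inl_inr hr hG comap_eq, map_one]
    exact Subgroup.map_id _
  · refine ⟨rr dsA, ?_⟩
    rw [eq_closure_inl_inr hr hG comap_eq]
    exact map_conj_rr_dsA_closure _ _

end RotationMem

lemma nonempty_closure_neg_one_d1s_mulEquiv :
    Nonempty ((Subgroup.closure {tl (-1) (-1), rr d1s} : Subgroup NQ) ≃*
      Multiplicative (ZMod 2 × ZMod 4)) := by
  refine nonempty_closure_pair_mulEquiv ?_ ?_ ?_ (disjoint_zpowers_inl_inr _ _)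
  · ext : 1 <;> simp [tl, rr, coe_d1s]
  · rw [tl, orderOf_injective _ SemidirectProduct.inl_injective, Prod.orderOf_mk,
      ← (isPrimitiveRoot_units_neg_one (R := ℂ) (by simp)).eq_orderOf, Nat.lcm_self]
  · exact (orderOf_injective _ SemidirectProduct.inr_injective d1s).trans orderOf_d1s

end Normalizer

/-!
STATEMENT 5: a finite non-cyclic subgroup G ≤ N with π(G) cyclic of order 4 and
|G ∩ T| ∈ {1,2,3,5} is conjugate in N to ⟨τ_{ζ₅,ζ₅²}, ι₁·s⟩ ≅ 𝔉₅ = C₅⋊C₄ (order 20)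
or to ⟨τ_{−1,−1}, ι₁·s⟩ ≅ C₂ × C₄.
-/
theorem classification_nu_C4 (G : Subgroup NQ) (hfin : Finite G) (hnc : ¬IsCyclic G)
    (hcyc : IsCyclic (Subgroup.map πN G))
    (hord : Nat.card (Subgroup.map πN G) = 4)
    (hT : Nat.card (G ⊓ Tsub : Subgroup NQ) ∈ ({1, 2, 3, 5} : Set ℕ)) :
    (∃ h : NQ,
      Subgroup.map (MulAut.conj h).toMonoidHom G =
        Subgroup.closure {tl (ζu 5) (ζu 5 ^ 2), rr d1s} ∧
      Nat.card (Subgroup.closure {tl (ζu 5) (ζu 5 ^ 2), rr d1s} : Subgroup NQ) = 20) ∨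
    (∃ h : NQ,
      Subgroup.map (MulAut.conj h).toMonoidHom G =
        Subgroup.closure {tl (-1) (-1), rr d1s} ∧
      Nonempty ((Subgroup.closure {tl (-1) (-1), rr d1s} : Subgroup NQ) ≃*
        Multiplicative (ZMod 2 × ZMod 4))) := by
  obtain ⟨t, hr⟩ := exists_rr_d1s_mem_map_conj_inl (G := G) <| by
    rw [eq_zpowers_d1s_of_isCyclic hcyc hord]
    exact Subgroup.mem_zpowers d1s
  have hG : (G.map (MulAut.conj (SemidirectProduct.inl t)).toMonoidHom).map πN ≤
      Subgroup.zpowers d1s :=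
    ((map_rightHom_map_conj_inl t G).trans (eq_zpowers_d1s_of_isCyclic hcyc hord)).le
  have card_A := (comap_inl_map_conj_inl t G).symm ▸ card_comap_inl G
  have card_G : Nat.card (G ⊓ Tsub : Subgroup NQ) * 4 = Nat.card G := by
    rw [Tsub, SemidirectProduct.range_inl_eq_ker_rightHom, ← card_inf_ker_mul_card_map πN G, hord]
    rfl
  rcases hT with hT | hT | hT | hT
  · have := isCyclic_of_card_comap_inl_eq_one hr hG (card_A.trans hT)
    exact absurd ((G.equivMapOfInjective _ (MulAut.conj _).injective).isCyclic.2 this) hnc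
  · exact .inr ⟨_, eq_closure_of_card_comap_inl_eq_two hr hG (card_A.trans hT),
      nonempty_closure_neg_one_d1s_mulEquiv⟩
  · exact absurd (card_A.trans hT) (card_comap_inl_ne_three hr)
  · obtain ⟨h, h_eq⟩ := exists_conj_eq_closure_of_card_comap_inl_eq_five hr hG (card_A.trans hT)
    rw [map_conj_map_conj] at h_eq
    refine .inl ⟨_, h_eq, ?_⟩
    rw [← h_eq, Subgroup.card_map_of_injective (MulAut.conj _).injective, ← card_G, hT]

end
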